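/- Suppose a > 0, N(x) ≤ C·x for all x ≥ 1, and the function E₁ defined by E₁(u) = e^{−u} N(e^u) − a for u > 0 and E₁(u) = 0 for u ≤ 0 is integrable on ℝ. Let Ê₁(t) = ∫_ℝ E₁(u) e^{−itu} du. Then the function G defined on the closed half-plane {Re s ≥ 1} by G(s) = ζ(s) − a/(s − 1) for Re s > 1 and G(1 + it) = (1 + it) Ê₁(t) + a for t ∈ ℝ is continuous; in particular ζ(σ + it) − a/(σ − 1 + it) → (1 + it) Ê₁(t) + a as σ → 1⁺, locally uniformly in t. -/

import Mathlib

open MeasureTheory Real Filter Complex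

/-- The generalized integer attached to an exponent vector `α`: `n(α) = ∏ k, (p k)^(α k)`. -/
noncomputable def beurlingInt (p : ℕ → ℝ) (α : ℕ →₀ ℕ) : ℝ :=
  α.prod fun k e => (p k) ^ e

/-- Counting function of generalized integers: `N(x) = #{α : n(α) < x}`. -/
noncomputable def beurlingN (p : ℕ → ℝ) (x : ℝ) : ℕ :=
  Set.ncard {α : ℕ →₀ ℕ | beurlingInt p α < x}

/-- The Beurling zeta function `ζ(s) = ∑_α n(α)^{-s}`. -/
noncomputable def beurlingZeta (p : ℕ → ℝ) (s : ℂ) : ℂ :=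
  ∑' α : ℕ →₀ ℕ, (beurlingInt p α : ℂ) ^ (-s)

/-- The error term `E₁(u) = e^{-u} N(e^u) - a` for `u > 0`, and `0` for `u ≤ 0`. -/
noncomputable def beurlingE₁ (p : ℕ → ℝ) (a : ℝ) (u : ℝ) : ℝ :=
  if 0 < u then Real.exp (-u) * (beurlingN p (Real.exp u) : ℝ) - a else 0

/-- Fourier transform `Ê₁(t) = ∫ E₁(u) e^{-itu} du`. -/
noncomputable def beurlingE₁FT (p : ℕ → ℝ) (a : ℝ) (t : ℝ) : ℂ :=
  ∫ u : ℝ, (beurlingE₁ p a u : ℂ) * Complex.exp (-Complex.I * t * u)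

/-!
Let `n` be a family of reals `n i ≥ 1`, finitely many below each bound, with counting function `N`
and Dirichlet series `ζ(s) = ∑ i, (n i) ^ (-s)`; the generalized integers are such a family.
Writing `x ^ (-s) = s * ∫ u in Ioi (log x), exp (-s * u)` for every `x = n i` and exchanging sum
and integral gives `ζ(s) = s * ∫ u in Ioi 0, N(e ^ u) * exp (-s * u)`. Substituting
`e ^ (-u) * N(e ^ u) = E₁(u) + a` turns this into `ζ(s) - a / (s - 1) = s * ℒE₁(s - 1) + a`, where
`ℒ` is the Laplace transform. Since `E₁` is integrable, dominated convergence makes the right-hand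
side continuous up to `Re s = 1`, where `ℒE₁` is the Fourier transform of `E₁`.
-/

open Topology

section LocallyUniformLimits

lemma tendstoLocallyUniformly_of_tendsto_prod {X Y Z : Type*} [TopologicalSpace Y] [UniformSpace Z]
    {F : X → Y → Z} {f : Y → Z} {l : Filter X} (hf : Continuous f)
    (hF : ∀ y, Tendsto (fun q : X × Y => F q.1 q.2) (l ×ˢ 𝓝 y) (𝓝 (f y))) :
    TendstoLocallyUniformly F f l :=
  tendstoLocallyUniformly_iff_forall_tendsto.2 fun y =>
    (((hf.tendsto y).comp tendsto_snd).prodMk_nhds (hF y)).mono_right (nhds_le_uniformity _)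

lemma tendstoLocallyUniformly_vertical_line {Z : Type*} [UniformSpace Z] {F G : ℂ → Z} {c : ℝ}
    (hG : ContinuousOn G {s : ℂ | c ≤ s.re}) (hFG : Set.EqOn F G {s : ℂ | c < s.re}) :
    TendstoLocallyUniformly (fun σ t : ℝ => F (σ + t * Complex.I))
      (fun t : ℝ => G (c + t * Complex.I)) (𝓝[>] c) := by
  refine tendstoLocallyUniformly_of_tendsto_prod
    (hG.comp_continuous (by fun_prop) fun t => by simp) fun t => ?_
  have hright : ∀ᶠ q : ℝ × ℝ in 𝓝[>] c ×ˢ 𝓝 t, c < q.1 :=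
    tendsto_fst.eventually self_mem_nhdsWithin
  have hpoint : Tendsto (fun q : ℝ × ℝ => (q.1 + q.2 * Complex.I : ℂ)) (𝓝[>] c ×ˢ 𝓝 t)
      (𝓝[{s : ℂ | c ≤ s.re}] (c + t * Complex.I)) := by
    refine tendsto_nhdsWithin_iff.2 ⟨?_, hright.mono fun q hq => by simpa using hq.le⟩
    refine Tendsto.mono_left ?_ (Filter.prod_mono_left _ nhdsWithin_le_nhds)
    rw [← nhds_prod_eq]
    exact Continuous.tendsto' (by fun_prop) _ _ rfl
  refine Tendsto.congr' ?_ ((hG (c + t * Complex.I) (by simp)).tendsto.comp hpoint)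
  exact hright.mono fun q hq => (hFG (by simpa using hq)).symm

end LocallyUniformLimits

section LaplaceTransform

variable {E : Type*} [NormedAddCommGroup E] [NormedSpace ℂ E] {f : ℝ → E} {z : ℂ}

/-- The one-sided Laplace transform `∫₀^∞ e^{-zu} f(u) du` of a vector-valued function; as a Bochner
integral it is `0` where the integrand is not integrable. -/
noncomputable def laplaceTransform (f : ℝ → E) (z : ℂ) : E :=
  ∫ u in Set.Ioi (0 : ℝ), Complex.exp (-z * u) • f u

lemma norm_exp_neg_mul_le_one (hz : 0 ≤ z.re) {u : ℝ} (hu : 0 ≤ u) :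
    ‖Complex.exp (-z * u)‖ ≤ 1 := by
  rw [Complex.norm_exp, Real.exp_le_one_iff, Complex.re_mul_ofReal, Complex.neg_re, neg_mul,
    neg_nonpos]
  positivity

lemma ae_norm_exp_neg_mul_smul_le (f : ℝ → E) (hz : 0 ≤ z.re) :
    ∀ᵐ u : ℝ ∂volume.restrict (Set.Ioi 0), ‖Complex.exp (-z * u) • f u‖ ≤ ‖f u‖ := by
  filter_upwards [ae_restrict_mem measurableSet_Ioi] with u hu
  rw [norm_smul]
  exact mul_le_of_le_one_left (norm_nonneg _) (norm_exp_neg_mul_le_one hz (le_of_lt hu))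

lemma aestronglyMeasurable_exp_neg_mul_smul {μ : Measure ℝ} (hf : AEStronglyMeasurable f μ)
    (z : ℂ) : AEStronglyMeasurable (fun u : ℝ => Complex.exp (-z * u) • f u) μ :=
  AEStronglyMeasurable.smul (Continuous.aestronglyMeasurable (by fun_prop)) hf

lemma integrableOn_exp_neg_mul_smul (hf : IntegrableOn f (Set.Ioi 0)) (hz : 0 ≤ z.re) :
    IntegrableOn (fun u : ℝ => Complex.exp (-z * u) • f u) (Set.Ioi 0) :=
  Integrable.mono hf (aestronglyMeasurable_exp_neg_mul_smul hf.aestronglyMeasurable z)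
    (ae_norm_exp_neg_mul_smul_le f hz)

lemma continuousOn_laplaceTransform (hf : IntegrableOn f (Set.Ioi 0)) :
    ContinuousOn (laplaceTransform f) {z : ℂ | 0 ≤ z.re} :=
  continuousOn_of_dominated
    (fun z _ => aestronglyMeasurable_exp_neg_mul_smul hf.aestronglyMeasurable z)
    (fun _ hz => ae_norm_exp_neg_mul_smul_le f hz) hf.norm
    (Eventually.of_forall fun _ => Continuous.continuousOn (by fun_prop))

lemma integrableOn_exp_neg_mul_smul_const (hz : 0 < z.re) (x : E) :
    IntegrableOn (fun u : ℝ => Complex.exp (-z * u) • x) (Set.Ioi 0) :=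
  (integrableOn_exp_mul_complex_Ioi (by simpa using hz) 0).smul_const x

lemma integral_exp_neg_mul_Ioi (hz : 0 < z.re) (c : ℝ) :
    ∫ u in Set.Ioi c, Complex.exp (-z * u) = Complex.exp (-z * c) / z := by
  rw [integral_exp_mul_complex_Ioi (by simpa using hz), neg_div_neg_eq]

lemma laplaceTransform_const (hz : 0 < z.re) (a : ℂ) :
    laplaceTransform (fun _ => a) z = a / z := by
  simp only [laplaceTransform, smul_eq_mul]
  rw [integral_mul_const, integral_exp_neg_mul_Ioi hz, Complex.ofReal_zero, mul_zero,
    Complex.exp_zero, one_div_mul_eq_div]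

end LaplaceTransform

section CountingMultiplicity

variable {ι α E : Type*} [NormedAddCommGroup E] [NormedSpace ℝ E] {A : ι → Set α}

lemma hasSum_indicator_of_finite {x : α} (hA : {i | x ∈ A i}.Finite) {M : Type*}
    [AddCommMonoid M] [TopologicalSpace M] (f : α → M) :
    HasSum (fun i => (A i).indicator f x) ({i | x ∈ A i}.ncard • f x) := by
  classical
  have hsum : ∑ i ∈ hA.toFinset, (A i).indicator f x = {i | x ∈ A i}.ncard • f x := by
    rw [Set.ncard_eq_toFinset_card _ hA]
    exact Finset.sum_eq_card_nsmul fun i hi =>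
      Set.indicator_of_mem (s := A i) (hA.mem_toFinset.1 hi) f
  rw [← hsum]
  exact hasSum_sum_of_ne_finset_zero fun i hi =>
    Set.indicator_of_notMem (s := A i) (fun hx => hi (hA.mem_toFinset.2 hx)) f

lemma hasSum_setIntegral_of_pointFinite [Countable ι] [MeasurableSpace α] {μ : Measure α}
    (hA : ∀ i, MeasurableSet (A i)) (hfin : ∀ x, {i | x ∈ A i}.Finite) {f : α → E}
    (hf : AEStronglyMeasurable f μ)
    (hint : Integrable (fun x => {i | x ∈ A i}.ncard • f x) μ) :
    HasSum (fun i => ∫ x in A i, f x ∂μ) (∫ x, {i | x ∈ A i}.ncard • f x ∂μ) := by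
  have hnorm (x : α) : HasSum (fun i => (A i).indicator (fun y => ‖f y‖) x)
      ({i | x ∈ A i}.ncard • ‖f x‖) := hasSum_indicator_of_finite (hfin x) _
  simp_rw [← integral_indicator (hA _)]
  refine hasSum_integral_of_dominated_convergence
    (fun i => (A i).indicator fun y => ‖f y‖) (fun i => hf.indicator (hA i))
    (fun i => Eventually.of_forall fun x => (norm_indicator_eq_indicator_norm f x).le)
    (Eventually.of_forall fun x => (hnorm x).summable) ?_
    (Eventually.of_forall fun x => hasSum_indicator_of_finite (hfin x) f)
  simpa only [(hnorm _).tsum_eq, RCLike.norm_nsmul ℝ] using hint.norm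

lemma countable_of_finite_setOf_lt {n : ι → ℝ} (hfin : ∀ x, {i | n i < x}.Finite) :
    Countable ι := by
  have hcover : (⋃ k : ℕ, {i | n i < k}) = Set.univ :=
    Set.iUnion_eq_univ_iff.2 fun i => exists_nat_gt (n i)
  rw [← Set.countable_univ_iff, ← hcover]
  exact Set.countable_iUnion fun k => (hfin k).countable

end CountingMultiplicity

section GeneralDirichletSeries

variable {ι : Type*} {n : ι → ℝ} {a : ℝ} {s : ℂ}

/-- The counting function `#{i | n i < x}` of a family of reals, generalizing `beurlingN`; it is `0`
where the set is infinite. -/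
noncomputable def countingFunction (n : ι → ℝ) (x : ℝ) : ℕ :=
  Set.ncard {i | n i < x}

/-- The general Dirichlet series `∑ i, (n i)^{-s}`, with frequencies `log (n i)`, generalizing
`beurlingZeta`. -/
noncomputable def generalDirichletSeries (n : ι → ℝ) (s : ℂ) : ℂ :=
  ∑' i, (n i : ℂ) ^ (-s)

/-- The normalized remainder `e^{-u} #{i | n i < e^u} - a` for `u > 0`, extended by `0`,
generalizing `beurlingE₁`. -/
noncomputable def countingError (n : ι → ℝ) (a : ℝ) (u : ℝ) : ℝ :=
  if 0 < u then Real.exp (-u) * (countingFunction n (Real.exp u) : ℝ) - a else 0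

/-- The Fourier transform of `countingError n a`, in the normalization `e^{-itu}` of
`beurlingE₁FT`. -/
noncomputable def countingErrorFT (n : ι → ℝ) (a : ℝ) (t : ℝ) : ℂ :=
  ∫ u : ℝ, (countingError n a u : ℂ) * Complex.exp (-Complex.I * t * u)

lemma cpow_neg_eq_mul_integral {x : ℝ} (hx : 0 < x) (hs : 0 < s.re) :
    (x : ℂ) ^ (-s) = s * ∫ u in Set.Ioi (Real.log x), Complex.exp (-s * u) := by
  have hs₀ : s ≠ 0 := fun h => hs.ne' (by rw [h, Complex.zero_re])
  rw [integral_exp_neg_mul_Ioi hs, mul_div_cancel₀ _ hs₀,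
    Complex.cpow_def_of_ne_zero (Complex.ofReal_ne_zero.2 hx.ne'), ← Complex.ofReal_log hx.le,
    mul_comm (-s)]

lemma generalDirichletSeries_eq_mul_laplaceTransform (hn : ∀ i, 1 ≤ n i)
    (hfin : ∀ x, {i | n i < x}.Finite) (hs : 0 < s.re)
    (hint : IntegrableOn
      (fun u : ℝ => Complex.exp (-s * u) • (countingFunction n (Real.exp u) : ℂ)) (Set.Ioi 0)) :
    generalDirichletSeries n s =
      s * laplaceTransform (fun u => (countingFunction n (Real.exp u) : ℂ)) s := by
  have := countable_of_finite_setOf_lt hfin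
  have hpos (i : ι) : 0 < n i := one_pos.trans_le (hn i)
  have hcount (u : ℝ) : Set.ncard {i | u ∈ Set.Ioi (Real.log (n i))} • Complex.exp (-s * u) =
      Complex.exp (-s * u) • (countingFunction n (Real.exp u) : ℂ) := by
    simp only [Set.mem_Ioi, Real.log_lt_iff_lt_exp (hpos _), countingFunction, nsmul_eq_mul,
      smul_eq_mul, mul_comm]
  have hsum := hasSum_setIntegral_of_pointFinite (μ := volume.restrict (Set.Ioi 0))
    (A := fun i => Set.Ioi (Real.log (n i))) (fun _ => measurableSet_Ioi)
    (fun u => by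
      simpa only [Set.mem_Ioi, Real.log_lt_iff_lt_exp (hpos _)] using hfin (Real.exp u))
    (f := fun u : ℝ => Complex.exp (-s * u)) (Continuous.aestronglyMeasurable (by fun_prop))
    (by simpa only [hcount, IntegrableOn] using hint)
  have hrestrict (i : ι) : (volume.restrict (Set.Ioi (0 : ℝ))).restrict
      (Set.Ioi (Real.log (n i))) = volume.restrict (Set.Ioi (Real.log (n i))) :=
    Measure.restrict_restrict_of_subset (Set.Ioi_subset_Ioi (Real.log_nonneg (hn i)))
  simp only [hrestrict, hcount] at hsum
  simp only [generalDirichletSeries, cpow_neg_eq_mul_integral (hpos _) hs]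
  exact (hsum.mul_left s).tsum_eq

lemma exp_smul_countingFunction_eq {u : ℝ} (hu : 0 < u) (n : ι → ℝ) (a : ℝ) (s : ℂ) :
    Complex.exp (-s * u) • (countingFunction n (Real.exp u) : ℂ) =
      Complex.exp (-(s - 1) * u) • (countingError n a u : ℂ) +
        Complex.exp (-(s - 1) * u) • (a : ℂ) := by
  have hexp : Complex.exp (-s * u) = Complex.exp (-(s - 1) * u) * Complex.exp (-u) := by
    rw [← Complex.exp_add]
    ring_nf
  simp only [countingError, if_pos hu, hexp, smul_eq_mul]
  push_cast
  ring

lemma generalDirichletSeries_sub_pole_eq (hn : ∀ i, 1 ≤ n i)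
    (hfin : ∀ x, {i | n i < x}.Finite) (herr : Integrable (countingError n a)) (hs : 1 < s.re) :
    generalDirichletSeries n s - a / (s - 1) =
      s * laplaceTransform (fun u => (countingError n a u : ℂ)) (s - 1) + a := by
  have hs₁ : 0 < (s - 1).re := by simpa using hs
  have hs₁_ne : s - 1 ≠ 0 := fun h => hs₁.ne' (by rw [h, Complex.zero_re])
  have hsplit : Set.EqOn
      (fun u : ℝ => Complex.exp (-s * u) • (countingFunction n (Real.exp u) : ℂ))
      (fun u : ℝ => Complex.exp (-(s - 1) * u) • (countingError n a u : ℂ) +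
        Complex.exp (-(s - 1) * u) • (a : ℂ)) (Set.Ioi 0) :=
    fun u hu => exp_smul_countingFunction_eq hu n a s
  have herr_complex : IntegrableOn (fun u => (countingError n a u : ℂ)) (Set.Ioi 0) :=
    herr.ofReal.integrableOn
  have hint_error := integrableOn_exp_neg_mul_smul herr_complex hs₁.le
  have hint_const := integrableOn_exp_neg_mul_smul_const hs₁ (a : ℂ)
  have hlaplace : laplaceTransform (fun u => (countingFunction n (Real.exp u) : ℂ)) s =
      laplaceTransform (fun u => (countingError n a u : ℂ)) (s - 1) + a / (s - 1) := by
    rw [← laplaceTransform_const hs₁, laplaceTransform,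
      setIntegral_congr_fun measurableSet_Ioi hsplit, integral_add hint_error hint_const]
    rfl
  rw [generalDirichletSeries_eq_mul_laplaceTransform hn hfin (one_pos.trans hs)
    ((hint_error.add hint_const).congr_fun hsplit.symm measurableSet_Ioi), hlaplace]
  field_simp
  ring

lemma countingErrorFT_eq_laplaceTransform (n : ι → ℝ) (a t : ℝ) :
    countingErrorFT n a t =
      laplaceTransform (fun u => (countingError n a u : ℂ)) (t * Complex.I) := by
  rw [laplaceTransform, setIntegral_eq_integral_of_forall_compl_eq_zero fun u hu => ?_]
  · refine integral_congr_ae (Eventually.of_forall fun u => ?_)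
    simp only [smul_eq_mul]
    ring_nf
  · rw [countingError, if_neg (Set.notMem_Ioi.1 hu).not_gt, Complex.ofReal_zero, smul_zero]

lemma continuousOn_mul_laplaceTransform_countingError (herr : Integrable (countingError n a)) :
    ContinuousOn
      (fun s : ℂ => s * laplaceTransform (fun u => (countingError n a u : ℂ)) (s - 1) + a)
      {s : ℂ | 1 ≤ s.re} :=
  (continuousOn_id.mul ((continuousOn_laplaceTransform herr.ofReal.integrableOn).comp
    (Continuous.continuousOn (by fun_prop)) fun s hs => by simpa using hs)).add continuousOn_const

theorem boundary_continuity_of_zeta_general (hn : ∀ i, 1 ≤ n i)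
    (hfin : ∀ x, {i | n i < x}.Finite) (herr : Integrable (countingError n a)) :
    ContinuousOn
        (fun s : ℂ => if 1 < s.re then generalDirichletSeries n s - a / (s - 1)
          else (1 + s.im * Complex.I) * countingErrorFT n a s.im + a)
        {s : ℂ | 1 ≤ s.re} ∧
      TendstoLocallyUniformly
        (fun σ : ℝ => fun t : ℝ =>
          generalDirichletSeries n (σ + t * Complex.I) - a / (σ - 1 + t * Complex.I))
        (fun t : ℝ => (1 + t * Complex.I) * countingErrorFT n a t + a)
        (𝓝[>] 1) := by
  have hcont := continuousOn_mul_laplaceTransform_countingError herr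
  simp only [countingErrorFT_eq_laplaceTransform]
  constructor
  · refine hcont.congr fun s hs => ?_
    dsimp only
    split_ifs with hre
    · exact generalDirichletSeries_sub_pole_eq hn hfin herr hre
    · have hs_eq : s = 1 + s.im * Complex.I :=
        Complex.ext (by simpa using le_antisymm (not_lt.1 hre) hs) (by simp)
      rw [← hs_eq, show (s.im * Complex.I : ℂ) = s - 1 from (sub_eq_of_eq_add' hs_eq).symm]
  · have hlim := tendstoLocallyUniformly_vertical_line hcont fun s hs =>
      generalDirichletSeries_sub_pole_eq hn hfin herr hs
    simpa only [Complex.ofReal_one, add_sub_cancel_left, add_sub_right_comm] using hlim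

end GeneralDirichletSeries

section BeurlingIntegers

variable {p : ℕ → ℝ}

lemma one_le_beurlingInt (hp : ∀ k, 1 ≤ p k) (α : ℕ →₀ ℕ) : 1 ≤ beurlingInt p α :=
  Finset.one_le_prod fun k _ => one_le_pow₀ (hp k)

lemma pow_le_beurlingInt (hp : ∀ k, 1 ≤ p k) (α : ℕ →₀ ℕ) (k : ℕ) :
    p k ^ α k ≤ beurlingInt p α := by
  have hfactor : p k ^ α k * beurlingInt p (α.erase k) = beurlingInt p α :=
    Finsupp.mul_prod_erase' α k (fun k e => p k ^ e) fun _ => pow_zero _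
  rw [← hfactor]
  exact le_mul_of_one_le_right (pow_nonneg (zero_le_one.trans (hp k)) _)
    (one_le_beurlingInt hp _)

lemma finite_setOf_beurlingInt_lt (hp : ∀ k, 1 < p k) (hptop : Tendsto p atTop atTop) (x : ℝ) :
    {α : ℕ →₀ ℕ | beurlingInt p α < x}.Finite := by
  obtain ⟨K, hK⟩ := (hptop.eventually_ge_atTop x).exists_forall_of_atTop
  choose M hM using fun k => pow_unbounded_of_one_lt x (hp k)
  refine (Set.finite_Iic (Finsupp.indicator (Finset.range K) fun k _ => M k)).subset
    fun α hα k => ?_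
  have hpow : p k ^ α k < x := (pow_le_beurlingInt (fun k => (hp k).le) α k).trans_lt hα
  by_cases hk : k < K
  · rw [Finsupp.indicator_of_mem (Finset.mem_range.2 hk)]
    exact ((pow_lt_pow_iff_right₀ (hp k)).1 (hpow.trans (hM k))).le
  · have hαk : α k = 0 := by
      by_contra hne
      exact (hK k (not_lt.1 hk)).not_gt ((le_self_pow₀ (hp k).le hne).trans_lt hpow)
    exact hαk ▸ Nat.zero_le _

end BeurlingIntegers

/-- If `E₁ ∈ L¹`, the function `G(s) = ζ(s) - a/(s-1)` (for `Re s > 1`),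
`G(1+it) = (1+it)Ê₁(t) + a` (on `Re s = 1`), is continuous on the closed half-plane
`Re s ≥ 1`; in particular `ζ(σ+it) - a/(σ-1+it) → (1+it)Ê₁(t) + a` as `σ → 1⁺`,
locally uniformly in `t`. -/
theorem boundary_continuity_of_zeta
    (p : ℕ → ℝ) (hmono : Monotone p) (hp1 : 1 < p 0) (hptop : Tendsto p atTop atTop)
    (a : ℝ) (ha : 0 < a)
    (C : ℝ) (hC : ∀ x : ℝ, 1 ≤ x → (beurlingN p x : ℝ) ≤ C * x)
    (hE₁ : Integrable (beurlingE₁ p a)) :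
    ContinuousOn
        (fun s : ℂ => if 1 < s.re then beurlingZeta p s - a / (s - 1)
          else (1 + s.im * Complex.I) * beurlingE₁FT p a s.im + a)
        {s : ℂ | 1 ≤ s.re} ∧
      TendstoLocallyUniformly
        (fun σ : ℝ => fun t : ℝ =>
          beurlingZeta p (σ + t * Complex.I) - a / (σ - 1 + t * Complex.I))
        (fun t : ℝ => (1 + t * Complex.I) * beurlingE₁FT p a t + a)
        (nhdsWithin 1 (Set.Ioi 1)) := by
  have hp : ∀ k, 1 < p k := fun k => hp1.trans_le (hmono k.zero_le)
  exact boundary_continuity_of_zeta_general (one_le_beurlingInt fun k => (hp k).le)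
    (finite_setOf_beurlingInt_lt hp hptop) hE₁
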